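/- arXiv:2205.09833 — 2 statements merged into one kernel-verified Lean document; each statement's English description precedes it below -/
import Mathlib

section
/- Let n ≥ 1 and let T be a nonzero real n×n matrix with spectral radius ρ(T) (the maximum modulus of its complex eigenvalues). For every ε > 0 and every δ with 0 < δ < 1, there exist natural numbers M and K ≥ 1 such that for every m > M the following holds: if x₁, …, x_m are chosen independently and uniformly at random from the unit sphere {x ∈ ℝⁿ : ‖x‖ = 1} (i.e., according to the m-fold product of the normalized uniform (rotation-invariant) probability measure on the sphere), then with probability greater than 1 − δ one has |ρ(T) − (max_{1≤j≤m} ‖Tᴷ x_j‖)^{1/K}| < ε, where ‖·‖ denotes the Euclidean norm. -/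
open MeasureTheory Metric

/-- The normalized uniform (rotation-invariant) probability measure on the unit sphere of
`ℝⁿ`, obtained by normalizing the cone (surface) measure induced by the Lebesgue measure. -/
noncomputable def uniformSphereMeasure (n : ℕ) :
    Measure (sphere (0 : EuclideanSpace ℝ (Fin n)) 1) :=
  ((volume : Measure (EuclideanSpace ℝ (Fin n))).toSphere Set.univ)⁻¹ •
    (volume : Measure (EuclideanSpace ℝ (Fin n))).toSphere

/-!
By Gelfand's formula `‖T ^ K‖ ^ (1 / K) → ρ(T)`; the formula passes from complex to real matrices
because complexification preserves the Euclidean operator norm. Fix a large `K`. Since `‖T ^ K‖` is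
the supremum over the unit sphere of the continuous function `x ↦ ‖T ^ K x‖`, the set where this
function is nearly maximal is open and nonempty, hence of positive measure, and among sufficiently
many independent samples at least one falls into it with probability close to `1`.
-/

open Filter Topology
open scoped Matrix Matrix.Norms.L2Operator

section Complexification

variable {𝕜 m n : Type*} [RCLike 𝕜]

theorem euclidean_norm_sq_eq_re_add_im [Fintype n] (z : n → 𝕜) :
    ‖WithLp.toLp 2 z‖ ^ 2 =
      ‖WithLp.toLp 2 fun i => RCLike.re (z i)‖ ^ 2 +
        ‖WithLp.toLp 2 fun i => RCLike.im (z i)‖ ^ 2 := by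
  simp only [EuclideanSpace.norm_sq_eq, RCLike.norm_sq_eq_def, Real.norm_eq_abs, sq_abs, ← sq,
    Finset.sum_add_distrib]

theorem euclidean_norm_algebraMap_comp [Fintype n] (x : n → ℝ) :
    ‖WithLp.toLp 2 (algebraMap ℝ 𝕜 ∘ x)‖ = ‖WithLp.toLp 2 x‖ := by
  simp [EuclideanSpace.norm_eq]

theorem re_map_algebraMap_mulVec [Fintype n] (A : Matrix m n ℝ) (z : n → 𝕜) :
    (fun i => RCLike.re ((A.map (algebraMap ℝ 𝕜) *ᵥ z) i)) = A *ᵥ fun i => RCLike.re (z i) := by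
  ext i
  simp [Matrix.mulVec, dotProduct]

theorem im_map_algebraMap_mulVec [Fintype n] (A : Matrix m n ℝ) (z : n → 𝕜) :
    (fun i => RCLike.im ((A.map (algebraMap ℝ 𝕜) *ᵥ z) i)) = A *ᵥ fun i => RCLike.im (z i) := by
  ext i
  simp [Matrix.mulVec, dotProduct]

variable [Fintype m] [Fintype n] [DecidableEq n]

theorem l2_opNorm_le_bound {A : Matrix m n 𝕜} {C : ℝ} (hC : 0 ≤ C)
    (h : ∀ z : n → 𝕜, ‖WithLp.toLp 2 (A *ᵥ z)‖ ≤ C * ‖WithLp.toLp 2 z‖) : ‖A‖ ≤ C := by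
  rw [Matrix.l2_opNorm_def]
  exact ContinuousLinearMap.opNorm_le_bound _ hC fun z => h z.ofLp

theorem euclidean_norm_map_algebraMap_mulVec_le (A : Matrix m n ℝ) (z : n → 𝕜) :
    ‖WithLp.toLp 2 (A.map (algebraMap ℝ 𝕜) *ᵥ z)‖ ≤ ‖A‖ * ‖WithLp.toLp 2 z‖ := by
  have hreal (x : n → ℝ) :
      ‖WithLp.toLp 2 (A *ᵥ x)‖ ^ 2 ≤ ‖A‖ ^ 2 * ‖WithLp.toLp 2 x‖ ^ 2 := by
    rw [← mul_pow]
    gcongr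
    exact A.l2_opNorm_mulVec (WithLp.toLp 2 x)
  refine le_of_sq_le_sq ?_ (by positivity)
  rw [mul_pow, euclidean_norm_sq_eq_re_add_im, euclidean_norm_sq_eq_re_add_im z, mul_add,
    re_map_algebraMap_mulVec, im_map_algebraMap_mulVec]
  exact add_le_add (hreal _) (hreal _)

theorem euclidean_norm_mulVec_le_map_algebraMap (A : Matrix m n ℝ) (x : n → ℝ) :
    ‖WithLp.toLp 2 (A *ᵥ x)‖ ≤ ‖A.map (algebraMap ℝ 𝕜)‖ * ‖WithLp.toLp 2 x‖ := by
  have hmap : A.map (algebraMap ℝ 𝕜) *ᵥ (algebraMap ℝ 𝕜 ∘ x) = algebraMap ℝ 𝕜 ∘ (A *ᵥ x) :=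
    funext fun i => ((algebraMap ℝ 𝕜).map_mulVec A x i).symm
  calc ‖WithLp.toLp 2 (A *ᵥ x)‖
      = ‖WithLp.toLp 2 (A.map (algebraMap ℝ 𝕜) *ᵥ (algebraMap ℝ 𝕜 ∘ x))‖ := by
        rw [hmap, euclidean_norm_algebraMap_comp]
    _ ≤ ‖A.map (algebraMap ℝ 𝕜)‖ * ‖WithLp.toLp 2 (algebraMap ℝ 𝕜 ∘ x)‖ :=
        Matrix.l2_opNorm_mulVec _ (WithLp.toLp 2 _)
    _ = ‖A.map (algebraMap ℝ 𝕜)‖ * ‖WithLp.toLp 2 x‖ := by rw [euclidean_norm_algebraMap_comp]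

theorem l2_opNorm_map_algebraMap (A : Matrix m n ℝ) : ‖A.map (algebraMap ℝ 𝕜)‖ = ‖A‖ :=
  le_antisymm
    (l2_opNorm_le_bound (norm_nonneg _) (euclidean_norm_map_algebraMap_mulVec_le A))
    (l2_opNorm_le_bound (norm_nonneg _) (euclidean_norm_mulVec_le_map_algebraMap A))

end Complexification

section Gelfand

theorem spectralRadius_ne_top {𝕜 A : Type*} [NontriviallyNormedField 𝕜] [NormedRing A]
    [NormedAlgebra 𝕜 A] [CompleteSpace A] (a : A) : spectralRadius 𝕜 a ≠ ⊤ := by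
  have h := spectrum.spectralRadius_le_pow_nnnorm_pow_one_div 𝕜 a 0
  refine ne_top_of_le_ne_top ?_ h
  simp [ENNReal.mul_ne_top]

theorem tendsto_norm_pow_rpow_toReal_spectralRadius {A : Type*} [NormedRing A]
    [NormedAlgebra ℂ A] [CompleteSpace A] (a : A) :
    Tendsto (fun k : ℕ => ‖a ^ k‖ ^ ((1 : ℝ) / k)) atTop (𝓝 (spectralRadius ℂ a).toReal) := by
  have h := (ENNReal.tendsto_toReal (spectralRadius_ne_top (𝕜 := ℂ) a)).comp
    (spectrum.pow_norm_pow_one_div_tendsto_nhds_spectralRadius a)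
  exact h.congr fun k => ENNReal.toReal_ofReal (by positivity)

theorem tendsto_norm_toEuclideanCLM_pow_rpow_toReal_spectralRadius {ι : Type*} [Fintype ι]
    [DecidableEq ι] (T : Matrix ι ι ℝ) :
    Tendsto (fun k : ℕ => ‖Matrix.toEuclideanCLM (𝕜 := ℝ) T ^ k‖ ^ ((1 : ℝ) / k)) atTop
      (𝓝 (spectralRadius ℂ (T.map (algebraMap ℝ ℂ))).toReal) := by
  refine (tendsto_norm_pow_rpow_toReal_spectralRadius (T.map (algebraMap ℝ ℂ))).congr fun k => ?_
  have hnorm : ‖T.map (algebraMap ℝ ℂ) ^ k‖ = ‖Matrix.toEuclideanCLM (𝕜 := ℝ) T ^ k‖ := by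
    rw [← Matrix.map_pow, l2_opNorm_map_algebraMap, ← map_pow, Matrix.l2_opNorm_toEuclideanCLM]
  rw [hnorm]

end Gelfand

section Sampling

variable {X : Type*} [MeasurableSpace X] {μ : Measure X} [IsProbabilityMeasure μ]

theorem pi_setOf_exists_mem {ι : Type*} [Fintype ι] {s : Set X} (hs : MeasurableSet s) :
    Measure.pi (fun _ : ι => μ) {x | ∃ j, x j ∈ s} = 1 - μ sᶜ ^ Fintype.card ι := by
  have hcompl : {x : ι → X | ∃ j, x j ∈ s} = (Set.univ.pi fun _ => sᶜ)ᶜ := by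
    ext x
    simp
  rw [hcompl, prob_compl_eq_one_sub (.univ_pi fun _ => hs.compl), Measure.pi_pi,
    Finset.prod_const, Finset.card_univ]

theorem tendsto_pi_setOf_exists_mem {s : Set X} (hs : MeasurableSet s) (hμs : μ s ≠ 0) :
    Tendsto (fun m : ℕ => Measure.pi (fun _ : Fin m => μ) {x | ∃ j, x j ∈ s}) atTop (𝓝 1) := by
  have hlt : μ sᶜ < 1 := by
    rw [prob_compl_eq_one_sub hs]
    exact ENNReal.sub_lt_self ENNReal.one_ne_top one_ne_zero hμs
  have hpow := ENNReal.tendsto_pow_atTop_nhds_zero_of_lt_one hlt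
  simpa only [pi_setOf_exists_mem hs, Fintype.card_fin, tsub_zero] using
    ENNReal.Tendsto.sub tendsto_const_nhds hpow (.inl ENNReal.one_ne_top)

theorem tendsto_pi_iSup_mem_nhds [TopologicalSpace X] [OpensMeasurableSpace X]
    [μ.IsOpenPosMeasure] {α : Type*} [ConditionallyCompleteLinearOrder α] [NoMinOrder α]
    [TopologicalSpace α] [OrderTopology α] {f : X → α} (hf : LowerSemicontinuous f)
    (hbdd : BddAbove (Set.range f)) {V : Set α} (hV : V ∈ 𝓝 (⨆ x, f x)) :
    Tendsto (fun m : ℕ => Measure.pi (fun _ : Fin m => μ) {x | ⨆ j, f (x j) ∈ V})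
      atTop (𝓝 1) := by
  have : Nonempty X := μ.nonempty_of_neZero
  obtain ⟨l, hl, hlV⟩ := exists_Ioc_subset_of_mem_nhds hV (exists_lt _)
  have hopen : IsOpen (f ⁻¹' Set.Ioi l) := hf.isOpen_preimage l
  have hpos : μ (f ⁻¹' Set.Ioi l) ≠ 0 := hopen.measure_ne_zero μ (exists_lt_of_lt_ciSup hl)
  refine tendsto_of_tendsto_of_tendsto_of_le_of_le
    (tendsto_pi_setOf_exists_mem hopen.measurableSet hpos) tendsto_const_nhds
    (fun m => measure_mono ?_) (fun m => prob_le_one)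
  rintro x ⟨j, hj⟩
  have : Nonempty (Fin m) := ⟨j⟩
  have hbdd' : BddAbove (Set.range fun i => f (x i)) := hbdd.mono (Set.range_comp_subset_range x f)
  exact hlV ⟨hj.trans_le (le_ciSup hbdd' j), ciSup_le fun i => le_ciSup hbdd (x i)⟩

end Sampling

section Sphere

theorem tendsto_pi_iSup_norm_apply_mem_nhds {E F : Type*} [NormedAddCommGroup E] [NormedSpace ℝ E]
    [NormedAddCommGroup F] [NormedSpace ℝ F] [MeasurableSpace E] [OpensMeasurableSpace E]
    {μ : Measure (sphere (0 : E) 1)} [IsProbabilityMeasure μ] [μ.IsOpenPosMeasure]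
    (A : E →L[ℝ] F) {V : Set ℝ} (hV : V ∈ 𝓝 ‖A‖) :
    Tendsto (fun m : ℕ => Measure.pi (fun _ : Fin m => μ) {x | ⨆ j, ‖A (x j)‖ ∈ V})
      atTop (𝓝 1) := by
  have hsup : ⨆ x : sphere (0 : E) 1, ‖A x‖ = ‖A‖ := by
    rw [← A.sSup_sphere_eq_norm, sSup_image']
  have hbdd : BddAbove (Set.range fun x : sphere (0 : E) 1 => ‖A x‖) :=
    ⟨‖A‖, Set.forall_mem_range.2 fun x => A.unit_le_opNorm x (norm_eq_of_mem_sphere x).le⟩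
  have hcont : Continuous fun x : sphere (0 : E) 1 => ‖A x‖ := by fun_prop
  exact tendsto_pi_iSup_mem_nhds hcont.lowerSemicontinuous hbdd (hsup.symm ▸ hV)

instance uniformSphereMeasure.instIsProbabilityMeasure (n : ℕ) [NeZero n] :
    IsProbabilityMeasure (uniformSphereMeasure n) :=
  have : NeZero (volume : Measure (EuclideanSpace ℝ (Fin n))).toSphere :=
    ⟨Measure.toSphere_ne_zero _⟩
  isProbabilityMeasureSMul

instance uniformSphereMeasure.instIsOpenPosMeasure (n : ℕ) :
    (uniformSphereMeasure n).IsOpenPosMeasure :=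
  Measure.isOpenPosMeasure_smul _ (ENNReal.inv_ne_zero.2 (measure_ne_top _ _))

end Sphere

theorem prob_spectralRadius_approx_general {ι : Type*} [Fintype ι] [DecidableEq ι]
    (T : Matrix ι ι ℝ) (μ : Measure (sphere (0 : EuclideanSpace ℝ ι) 1))
    [IsProbabilityMeasure μ] [μ.IsOpenPosMeasure] {ε : ℝ} (hε : 0 < ε) :
    ∀ᶠ K : ℕ in atTop, Tendsto
      (fun m : ℕ => Measure.pi (fun _ : Fin m => μ)
        {x | |(spectralRadius ℂ (T.map (algebraMap ℝ ℂ))).toReal -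
          (⨆ j, ‖(Matrix.toEuclideanCLM (𝕜 := ℝ) T ^ K) (x j : EuclideanSpace ℝ ι)‖) ^
            ((1 : ℝ) / K)| < ε})
      atTop (𝓝 1) := by
  set ρ := (spectralRadius ℂ (T.map (algebraMap ℝ ℂ))).toReal
  have hgelfand := tendsto_norm_toEuclideanCLM_pow_rpow_toReal_spectralRadius T
  filter_upwards [hgelfand.eventually (ball_mem_nhds ρ hε)] with K hK
  have hroot : Continuous fun t : ℝ => t ^ ((1 : ℝ) / K) :=
    Real.continuous_rpow_const (by positivity)
  have hV : {t : ℝ | |ρ - t ^ ((1 : ℝ) / K)| < ε} ∈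
      𝓝 ‖Matrix.toEuclideanCLM (𝕜 := ℝ) T ^ K‖ := by
    refine (isOpen_lt (by fun_prop) continuous_const).mem_nhds ?_
    rwa [dist_comm, Real.dist_eq] at hK
  exact tendsto_pi_iSup_norm_apply_mem_nhds _ hV

/-- **Theorem 1 (stochastic approximation of the spectral radius).**
Let `n ≥ 1` and let `T` be a nonzero real `n × n` matrix with spectral radius `ρ(T)` (the
maximum modulus of its complex eigenvalues). For every `ε > 0` and `0 < δ < 1` there exist
`M` and `K ≥ 1` such that for every `m > M`: if `x₁, …, x_m` are drawn i.i.d. from the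
normalized uniform measure on the unit sphere of `ℝⁿ` (the joint law being the `m`-fold
product measure), then with probability greater than `1 - δ`,
`|ρ(T) - (max_j ‖T^K x_j‖)^(1/K)| < ε`. -/
theorem prob_spectralRadius_approx (n : ℕ) (hn : 1 ≤ n)
    (T : Matrix (Fin n) (Fin n) ℝ) (hT : T ≠ 0)
    (ε δ : ℝ) (hε : 0 < ε) (hδ0 : 0 < δ) (hδ1 : δ < 1) :
    ∃ M K : ℕ, 1 ≤ K ∧ ∀ m : ℕ, M < m →
      1 - ENNReal.ofReal δ <
        (Measure.pi fun _ : Fin m => uniformSphereMeasure n)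
          {x : Fin m → sphere (0 : EuclideanSpace ℝ (Fin n)) 1 |
            |(spectralRadius ℂ (T.map (algebraMap ℝ ℂ))).toReal -
                (⨆ j : Fin m, ‖(Matrix.toEuclideanCLM (𝕜 := ℝ) T ^ K)
                  ((x j : EuclideanSpace ℝ (Fin n)))‖) ^ ((1 : ℝ) / K)| < ε} := by
  have : NeZero n := ⟨Nat.one_le_iff_ne_zero.1 hn⟩
  obtain ⟨K, hK, hlim⟩ := ((eventually_ge_atTop 1).and
    (prob_spectralRadius_approx_general T (uniformSphereMeasure n) hε)).exists
  have hδ : 1 - ENNReal.ofReal δ < 1 :=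
    ENNReal.sub_lt_self ENNReal.one_ne_top one_ne_zero (ENNReal.ofReal_pos.2 hδ0).ne'
  obtain ⟨M, hM⟩ := eventually_atTop.1 (hlim.eventually_const_lt hδ)
  exact ⟨M, K, hK, fun m hm => hM m hm.le⟩
end

section
/- Let T be a real n×n matrix, K ≥ 1 a natural number, and let x*, x_r ∈ ℝⁿ be vectors with ‖x*‖ = ‖x_r‖ = 1 and ‖Tᴷ x_r‖ ≤ ‖Tᴷ x*‖, where ‖·‖ is the Euclidean norm. Then ‖Tᴷ x*‖^{1/K} − ‖Tᴷ x_r‖^{1/K} ≤ ‖Tᴷ‖^{1/K} · ‖x* − x_r‖^{1/K}, where ‖Tᴷ‖ denotes the operator norm of Tᴷ with respect to the Euclidean norm. -/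
section

variable {p : ℝ}

theorem norm_rpow_sub_norm_rpow_le {E : Type*} [SeminormedAddGroup E] (u v : E)
    (hp₀ : 0 ≤ p) (hp₁ : p ≤ 1) : ‖u‖ ^ p - ‖v‖ ^ p ≤ ‖u - v‖ ^ p := by
  rw [sub_le_iff_le_add]
  calc ‖u‖ ^ p ≤ (‖u - v‖ + ‖v‖) ^ p := by
        gcongr
        exact norm_le_norm_sub_add u v
    _ ≤ ‖u - v‖ ^ p + ‖v‖ ^ p :=
        Real.rpow_add_le_add_rpow (norm_nonneg _) (norm_nonneg _) hp₀ hp₁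

theorem root_norm_sub_le_general {𝕜 𝕜₂ E F : Type*} [NontriviallyNormedField 𝕜]
    [NontriviallyNormedField 𝕜₂] {σ : 𝕜 →+* 𝕜₂} [RingHomIsometric σ]
    [SeminormedAddCommGroup E] [NormedSpace 𝕜 E] [SeminormedAddCommGroup F] [NormedSpace 𝕜₂ F]
    (A : E →SL[σ] F) (x y : E) (hp₀ : 0 ≤ p) (hp₁ : p ≤ 1) :
    ‖A x‖ ^ p - ‖A y‖ ^ p ≤ ‖A‖ ^ p * ‖x - y‖ ^ p :=
  calc ‖A x‖ ^ p - ‖A y‖ ^ p ≤ ‖A x - A y‖ ^ p := norm_rpow_sub_norm_rpow_le _ _ hp₀ hp₁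
    _ = ‖A (x - y)‖ ^ p := by rw [map_sub]
    _ ≤ (‖A‖ * ‖x - y‖) ^ p := by
        gcongr
        exact A.le_opNorm _
    _ = ‖A‖ ^ p * ‖x - y‖ ^ p := Real.mul_rpow (norm_nonneg _) (norm_nonneg _)

end

/-- For a real `n × n` matrix `T`, `K ≥ 1`, and unit vectors `x*`, `x_r` in `ℝⁿ` with
`‖T^K x_r‖ ≤ ‖T^K x*‖`, one has
`‖T^K x*‖^(1/K) - ‖T^K x_r‖^(1/K) ≤ ‖T^K‖^(1/K) * ‖x* - x_r‖^(1/K)`. -/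
theorem root_norm_sub_le (n : ℕ) (T : Matrix (Fin n) (Fin n) ℝ) (K : ℕ) (hK : 1 ≤ K)
    (xstar xr : EuclideanSpace ℝ (Fin n)) (hxstar : ‖xstar‖ = 1) (hxr : ‖xr‖ = 1)
    (h : ‖(Matrix.toEuclideanCLM (𝕜 := ℝ) T ^ K) xr‖ ≤
          ‖(Matrix.toEuclideanCLM (𝕜 := ℝ) T ^ K) xstar‖) :
    ‖(Matrix.toEuclideanCLM (𝕜 := ℝ) T ^ K) xstar‖ ^ ((1 : ℝ) / K) -
        ‖(Matrix.toEuclideanCLM (𝕜 := ℝ) T ^ K) xr‖ ^ ((1 : ℝ) / K) ≤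
      ‖Matrix.toEuclideanCLM (𝕜 := ℝ) T ^ K‖ ^ ((1 : ℝ) / K) *
        ‖xstar - xr‖ ^ ((1 : ℝ) / K) := by
  have hp₁ : (1 : ℝ) / K ≤ 1 := by simpa only [one_div] using Nat.cast_inv_le_one K
  exact root_norm_sub_le_general _ xstar xr (by positivity) hp₁
end
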